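/- Let F(x,y) = r·φ(u,s,v,t) be a general spherically symmetric metric on a domain of ℝⁿ. At any point (x,y) with y ≠ 0 where φ is smooth, the fundamental tensor is given explicitly by g_{ij} = c₀δ_{ij} + c₁a_ia_j + c₂(y_i/r)(y_j/r) + c₃(a_j y_i/r + a_i y_j/r) + c₄(x_j y_i/r + x_i y_j/r) + c₅(a_j x_i + a_i x_j) + c₆ x_i x_j, where c₀ = φ² − sφφ_s − tφφ_t, c₁ = φ_t² + φφ_tt, c₂ = s²(φ_s² + φφ_ss) + t²(φ_t² + φφ_tt) + 2ts(φ_sφ_t + φφ_st) − sφφ_s − tφφ_t, c₃ = φφ_t − s(φ_sφ_t + φφ_st) − t(φ_t² + φφ_tt), c₄ = φφ_s − s(φ_s² + φφ_ss) − t(φ_sφ_t + φφ_st), c₅ = φ_sφ_t + φφ_st, c₆ = φ_s² + φφ_ss. -/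

import Mathlib

/-!
The formula is the result of differentiating `F² = r² φ(u,s,v,t)²` twice in `y`. With
`∂_j r = y_j / r`, `∂_j s = (x_j - s y_j / r) / r` and `∂_j t = (a_j - t y_j / r) / r`
(`hasFDerivAt_nrm`, `hasFDerivAt_sc`), and the chain rule `∂_j f = f_s ∂_j s + f_t ∂_j t` for
smooth `f(u,s,v,t)` (`hasFDerivAt_ev`), one finds
`½ ∂_j F² = φ (φ y_j + φ_s (r x_j - s y_j) + φ_t (r a_j - t y_j))` at every `y ≠ 0`
(`fderiv_Fm_sq`). This holds on the open set `y ≠ 0`, so it can be differentiated again by the same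
rules; the two mixed partials of `φ` in `s` and `t` that appear agree by `Smooth4.pds_pdt`, and
collecting terms gives the coefficients `c₀, …, c₆`.
-/

noncomputable section

open scoped BigOperators

namespace GSSFinsler

/-- `k`-th standard basis vector of `ℝⁿ`. -/
def bvec (n : ℕ) (k : Fin n) : Fin n → ℝ := Pi.single k 1

/-- Standard inner product on `ℝⁿ`. -/
def ip {n : ℕ} (x y : Fin n → ℝ) : ℝ := ∑ i, x i * y i

/-- Euclidean norm on `ℝⁿ`. -/
def nrm {n : ℕ} (y : Fin n → ℝ) : ℝ := Real.sqrt (ip y y)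

/-! Partial derivative operators on a smooth function of four real variables
`φ = φ(u, s, v, t)`. -/

def pdu (f : ℝ → ℝ → ℝ → ℝ → ℝ) (u s v t : ℝ) : ℝ := deriv (fun z => f z s v t) u
def pds (f : ℝ → ℝ → ℝ → ℝ → ℝ) (u s v t : ℝ) : ℝ := deriv (fun z => f u z v t) s
def pdv (f : ℝ → ℝ → ℝ → ℝ → ℝ) (u s v t : ℝ) : ℝ := deriv (fun z => f u s z t) v
def pdt (f : ℝ → ℝ → ℝ → ℝ → ℝ) (u s v t : ℝ) : ℝ := deriv (fun z => f u s v z) t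

/-- `u := |x|²`. -/
def uu {n : ℕ} (x : Fin n → ℝ) : ℝ := ip x x
/-- `s := ⟨x,y⟩/|y|`. -/
def sc {n : ℕ} (x y : Fin n → ℝ) : ℝ := ip x y / nrm y
/-- `v := ⟨a,x⟩`. -/
def vc {n : ℕ} (a x : Fin n → ℝ) : ℝ := ip a x
/-- `t := ⟨a,y⟩/|y|`. -/
def tc {n : ℕ} (a y : Fin n → ℝ) : ℝ := ip a y / nrm y

/-- Evaluation of a function of `(u,s,v,t)` at the point determined by `(a,x,y)`. -/
def ev {n : ℕ} (f : ℝ → ℝ → ℝ → ℝ → ℝ) (a x y : Fin n → ℝ) : ℝ :=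
  f (uu x) (sc x y) (vc a x) (tc a y)

/-- The general spherically symmetric metric `F(x,y) = |y| φ(u,s,v,t)`. -/
def Fm {n : ℕ} (φ : ℝ → ℝ → ℝ → ℝ → ℝ) (a x y : Fin n → ℝ) : ℝ :=
  nrm y * φ (uu x) (sc x y) (vc a x) (tc a y)

/-- Fundamental tensor `g_{ij} := ½ ∂²(F²)/∂y^i∂y^j`. -/
def gm {n : ℕ} (φ : ℝ → ℝ → ℝ → ℝ → ℝ) (a x y : Fin n → ℝ) (i j : Fin n) : ℝ :=
  (1/2) * fderiv ℝ (fun z => fderiv ℝ (fun w => (Fm φ a x w)^2) z (bvec n j)) y (bvec n i)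

/-- Cartan tensor `C_{ijk} := ½ ∂g_{ij}/∂y^k`. -/
def cart {n : ℕ} (φ : ℝ → ℝ → ℝ → ℝ → ℝ) (a x y : Fin n → ℝ) (i j k : Fin n) : ℝ :=
  (1/2) * fderiv ℝ (fun z => gm φ a x z i j) y (bvec n k)

/-- Angular metric `h_{ij} := g_{ij} − F_{y^i}F_{y^j}`. -/
def ang {n : ℕ} (φ : ℝ → ℝ → ℝ → ℝ → ℝ) (a x y : Fin n → ℝ) (i j : Fin n) : ℝ :=
  gm φ a x y i j -
    fderiv ℝ (fun w => Fm φ a x w) y (bvec n i) *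
      fderiv ℝ (fun w => Fm φ a x w) y (bvec n j)

/-- The fundamental tensor as a matrix. -/
def gMat {n : ℕ} (φ : ℝ → ℝ → ℝ → ℝ → ℝ) (a x y : Fin n → ℝ) :
    Matrix (Fin n) (Fin n) ℝ :=
  Matrix.of fun i j => gm φ a x y i j

/-- The inverse fundamental tensor `g^{ij}`. -/
def gInv {n : ℕ} (φ : ℝ → ℝ → ℝ → ℝ → ℝ) (a x y : Fin n → ℝ) :
    Matrix (Fin n) (Fin n) ℝ :=
  (gMat φ a x y)⁻¹

/-- Mean Cartan torsion `I_k := g^{jl} C_{jlk}`. -/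
def mci {n : ℕ} (φ : ℝ → ℝ → ℝ → ℝ → ℝ) (a x y : Fin n → ℝ) (k : Fin n) : ℝ :=
  ∑ j, ∑ l, gInv φ a x y j l * cart φ a x y j l k

/-- Squared norm `‖I‖² := g^{ij} I_i I_j` of the mean Cartan torsion. -/
def normI2 {n : ℕ} (φ : ℝ → ℝ → ℝ → ℝ → ℝ) (a x y : Fin n → ℝ) : ℝ :=
  ∑ i, ∑ j, gInv φ a x y i j * mci φ a x y i * mci φ a x y j

/-- `s_i := x_i − s·y_i/r`. -/
def sv {n : ℕ} (x y : Fin n → ℝ) (i : Fin n) : ℝ := x i - sc x y * (y i / nrm y)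
/-- `t_i := a_i − t·y_i/r`. -/
def tv {n : ℕ} (a y : Fin n → ℝ) (i : Fin n) : ℝ := a i - tc a y * (y i / nrm y)

/-- `‖𝔖‖² := g^{ij}s_is_j`. -/
def nS2 {n : ℕ} (φ : ℝ → ℝ → ℝ → ℝ → ℝ) (a x y : Fin n → ℝ) : ℝ :=
  ∑ i, ∑ j, gInv φ a x y i j * sv x y i * sv x y j
/-- `‖ℜ‖² := g^{ij}s_it_j`. -/
def nR2 {n : ℕ} (φ : ℝ → ℝ → ℝ → ℝ → ℝ) (a x y : Fin n → ℝ) : ℝ :=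
  ∑ i, ∑ j, gInv φ a x y i j * sv x y i * tv a y j
/-- `‖𝔗‖² := g^{ij}t_it_j`. -/
def nT2 {n : ℕ} (φ : ℝ → ℝ → ℝ → ℝ → ℝ) (a x y : Fin n → ℝ) : ℝ :=
  ∑ i, ∑ j, gInv φ a x y i j * tv a y i * tv a y j

/-! The scalars `σ₁, …, σ₁₁` as functions of `(u,s,v,t)`.  Subscripts on `φ`
denote partial derivatives; `φ_{st}` is `pdt (pds φ)` (first `s`, then `t`),
`φ_{ts}` is `pds (pdt φ)`, etc. -/

def sig1 (φ : ℝ → ℝ → ℝ → ℝ → ℝ) (u s v t : ℝ) : ℝ :=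
  φ u s v t - s * pds φ u s v t - t * pdt φ u s v t

def sig2 (φ : ℝ → ℝ → ℝ → ℝ → ℝ) (u s v t : ℝ) : ℝ :=
  sig1 φ u s v t * pds φ u s v t - s * φ u s v t * pds (pds φ) u s v t -
    t * φ u s v t * pds (pdt φ) u s v t

def sig3 (φ : ℝ → ℝ → ℝ → ℝ → ℝ) (u s v t : ℝ) : ℝ :=
  sig1 φ u s v t * pdt φ u s v t - s * φ u s v t * pdt (pds φ) u s v t -
    t * φ u s v t * pdt (pdt φ) u s v t

def sig4 (φ : ℝ → ℝ → ℝ → ℝ → ℝ) (u s v t : ℝ) : ℝ :=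
  3 * pds φ u s v t * pds (pds φ) u s v t + φ u s v t * pds (pds (pds φ)) u s v t

def sig5 (φ : ℝ → ℝ → ℝ → ℝ → ℝ) (u s v t : ℝ) : ℝ :=
  3 * pdt φ u s v t * pdt (pdt φ) u s v t + φ u s v t * pdt (pdt (pdt φ)) u s v t

def sig6 (φ : ℝ → ℝ → ℝ → ℝ → ℝ) (u s v t : ℝ) : ℝ :=
  2 * pds φ u s v t * pdt (pds φ) u s v t + pdt φ u s v t * pds (pds φ) u s v t +
    φ u s v t * pdt (pds (pds φ)) u s v t

def sig7 (φ : ℝ → ℝ → ℝ → ℝ → ℝ) (u s v t : ℝ) : ℝ :=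
  2 * pdt φ u s v t * pds (pdt φ) u s v t + pds φ u s v t * pdt (pdt φ) u s v t +
    φ u s v t * pds (pdt (pdt φ)) u s v t

def sig8 (φ : ℝ → ℝ → ℝ → ℝ → ℝ) (u s v t : ℝ) : ℝ :=
  φ u s v t * (sig1 φ u s v t * sig4 φ u s v t - 3 * sig2 φ u s v t * pds (pds φ) u s v t)

def sig9 (φ : ℝ → ℝ → ℝ → ℝ → ℝ) (u s v t : ℝ) : ℝ :=
  φ u s v t * (sig1 φ u s v t * sig5 φ u s v t - 3 * sig3 φ u s v t * pdt (pdt φ) u s v t)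

def sig10 (φ : ℝ → ℝ → ℝ → ℝ → ℝ) (u s v t : ℝ) : ℝ :=
  φ u s v t * (sig1 φ u s v t * sig6 φ u s v t - 2 * sig2 φ u s v t * pdt (pds φ) u s v t -
    sig3 φ u s v t * pds (pds φ) u s v t)

def sig11 (φ : ℝ → ℝ → ℝ → ℝ → ℝ) (u s v t : ℝ) : ℝ :=
  φ u s v t * (sig1 φ u s v t * sig7 φ u s v t - 2 * sig3 φ u s v t * pds (pdt φ) u s v t -
    sig2 φ u s v t * pdt (pdt φ) u s v t)

/-- The scalar `H` of Lemma 3.2. -/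
def Hc {n : ℕ} (φ : ℝ → ℝ → ℝ → ℝ → ℝ) (a x y : Fin n → ℝ) : ℝ :=
  ((n : ℝ) + 1) * (ev (pds φ) a x y / ev φ a x y +
      ev (pds (sig1 φ)) a x y / ev (sig1 φ) a x y) +
  nS2 φ a x y * (ev (pds (pds (pds φ))) a x y -
      3 * ev (pds (sig1 φ)) a x y * ev (pds (pds φ)) a x y / ev (sig1 φ) a x y) * ev φ a x y +
  2 * nR2 φ a x y * (ev (pdt (pds (pds φ))) a x y -
      (2 * ev (pds (sig1 φ)) a x y * ev (pdt (pds φ)) a x y +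
        ev (pdt (sig1 φ)) a x y * ev (pds (pds φ)) a x y) / ev (sig1 φ) a x y) * ev φ a x y +
  nT2 φ a x y * (ev (pds (pdt (pdt φ))) a x y -
      (2 * ev (pdt (sig1 φ)) a x y * ev (pds (pdt φ)) a x y +
        ev (pds (sig1 φ)) a x y * ev (pdt (pdt φ)) a x y) / ev (sig1 φ) a x y) * ev φ a x y

/-- The scalar `K` of Lemma 3.2. -/
def Kc {n : ℕ} (φ : ℝ → ℝ → ℝ → ℝ → ℝ) (a x y : Fin n → ℝ) : ℝ :=
  ((n : ℝ) + 1) * (ev (pdt φ) a x y / ev φ a x y +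
      ev (pdt (sig1 φ)) a x y / ev (sig1 φ) a x y) +
  nT2 φ a x y * (ev (pdt (pdt (pdt φ))) a x y -
      3 * ev (pdt (sig1 φ)) a x y * ev (pdt (pdt φ)) a x y / ev (sig1 φ) a x y) * ev φ a x y +
  nS2 φ a x y * (ev (pdt (pds (pds φ))) a x y -
      (2 * ev (pds (sig1 φ)) a x y * ev (pdt (pds φ)) a x y +
        ev (pdt (sig1 φ)) a x y * ev (pds (pds φ)) a x y) / ev (sig1 φ) a x y) * ev φ a x y +
  2 * nR2 φ a x y * (ev (pds (pdt (pdt φ))) a x y -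
      (2 * ev (pdt (sig1 φ)) a x y * ev (pds (pdt φ)) a x y +
        ev (pds (sig1 φ)) a x y * ev (pdt (pdt φ)) a x y) / ev (sig1 φ) a x y) * ev φ a x y

/-- The scalar `M` appearing in the proof of Theorem 1.1. -/
def Mc {n : ℕ} (φ : ℝ → ℝ → ℝ → ℝ → ℝ) (a x y : Fin n → ℝ) : ℝ :=
  ev (sig2 φ) a x y * (ev (sig1 φ) a x y * ((n : ℝ) - 2) * ev φ a x y +
      (ip a a - tc a y ^ 2) * ev φ a x y * ev (pdt (pdt φ)) a x y +
      (vc a x - sc x y * tc a y) * ev φ a x y * ev (pdt (pds φ)) a x y) -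
  ev (sig3 φ) a x y * ((vc a x - sc x y * tc a y) * ev φ a x y * ev (pds (pds φ)) a x y +
      (ip a a - tc a y ^ 2) * ev φ a x y * ev (pdt (pds φ)) a x y) +
  ev (sig10 φ) a x y * (vc a x - sc x y * tc a y) -
  ev (sig11 φ) a x y * (ip a a - tc a y ^ 2)

/-- The scalar `N` appearing in the proof of Theorem 1.1. -/
def Nc {n : ℕ} (φ : ℝ → ℝ → ℝ → ℝ → ℝ) (a x y : Fin n → ℝ) : ℝ :=
  ev (sig2 φ) a x y * ((vc a x - sc x y * tc a y) * ev φ a x y * ev (pdt (pdt φ)) a x y +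
      (uu x - sc x y ^ 2) * ev φ a x y * ev (pdt (pds φ)) a x y) -
  ev (sig3 φ) a x y * (ev (sig1 φ) a x y * ((n : ℝ) - 2) * ev φ a x y +
      (uu x - sc x y ^ 2) * ev φ a x y * ev (pds (pds φ)) a x y +
      (vc a x - sc x y * tc a y) * ev φ a x y * ev (pdt (pds φ)) a x y) +
  ev (sig10 φ) a x y * (uu x - sc x y ^ 2) -
  ev (sig11 φ) a x y * (vc a x - sc x y * tc a y)

end GSSFinsler

namespace GSSFinsler

/-- The linear functional `⟨x, ·⟩`. -/
def ipL {n : ℕ} (x : Fin n → ℝ) : (Fin n → ℝ) →L[ℝ] ℝ :=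
  ∑ i, x i • ContinuousLinearMap.proj i

lemma ipL_apply {n : ℕ} (x y : Fin n → ℝ) : ipL x y = ip x y := by
  simp [ipL, ip]

lemma ipL_bvec {n : ℕ} (x : Fin n → ℝ) (k : Fin n) : ipL x (bvec n k) = x k := by
  rw [ipL_apply]
  simp [ip, bvec, Pi.single_apply]

lemma ip_self_pos {n : ℕ} {y : Fin n → ℝ} (hy : y ≠ 0) : 0 < ip y y := by
  obtain ⟨k, hk⟩ := Function.ne_iff.mp hy
  refine Finset.sum_pos' (fun i _ => mul_self_nonneg _) ⟨k, Finset.mem_univ k, ?_⟩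
  exact mul_self_pos.mpr hk

lemma nrm_pos {n : ℕ} {y : Fin n → ℝ} (hy : y ≠ 0) : 0 < nrm y :=
  Real.sqrt_pos.mpr (ip_self_pos hy)

lemma hasFDerivAt_ip {n : ℕ} (x y : Fin n → ℝ) :
    HasFDerivAt (fun z => ip x z) (ipL x) y := by
  have h := (ipL x).hasFDerivAt (x := y)
  exact h.congr_of_eventuallyEq (Filter.Eventually.of_forall fun z => (ipL_apply x z).symm)

lemma hasFDerivAt_nrm {n : ℕ} {y : Fin n → ℝ} (hy : y ≠ 0) :
    HasFDerivAt (fun z => nrm z) ((nrm y)⁻¹ • ipL y) y := by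
  have h1 : HasFDerivAt (fun z : Fin n → ℝ => ip z z) ((2 : ℝ) • ipL y) y := by
    have h : HasFDerivAt (fun z : Fin n → ℝ => ∑ i, z i * z i)
        (∑ i, (y i • ContinuousLinearMap.proj i + y i • ContinuousLinearMap.proj i :
          (Fin n → ℝ) →L[ℝ] ℝ)) y :=
      HasFDerivAt.fun_sum fun i _ =>
        (hasFDerivAt_apply (𝕜 := ℝ) (F' := fun _ : Fin n => ℝ) i y).mul
          (hasFDerivAt_apply (𝕜 := ℝ) (F' := fun _ : Fin n => ℝ) i y)
    refine h.congr_fderiv ?_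
    rw [Finset.sum_add_distrib, two_smul]
    rfl
  have h2 := h1.sqrt (ip_self_pos hy).ne'
  refine h2.congr_fderiv ?_
  have := (nrm_pos hy).ne'
  rw [smul_smul]
  congr 1
  change 1 / (2 * nrm y) * 2 = _
  field_simp

/-- The quotient rule for `s = ⟨x,y⟩/r`; since `tc a y` has the same shape, the lemma also
serves for `t`. -/
lemma hasFDerivAt_sc {n : ℕ} (x : Fin n → ℝ) {y : Fin n → ℝ} (hy : y ≠ 0) :
    HasFDerivAt (fun z => sc x z)
      ((nrm y)⁻¹ • (ipL x - (sc x y / nrm y) • ipL y)) y := by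
  have hr := (nrm_pos hy).ne'
  have h := (hasFDerivAt_ip x y).fun_mul
    ((hasDerivAt_inv hr).comp_hasFDerivAt y (hasFDerivAt_nrm hy))
  refine HasFDerivAt.congr_fderiv (f := fun z => sc x z) h ?_
  ext w
  simp [sc]
  field_simp
  ring

/-- Joint smoothness of a function of the four variables `(u,s,v,t)`. -/
def Smooth4 (f : ℝ → ℝ → ℝ → ℝ → ℝ) : Prop :=
  ContDiff ℝ (⊤ : ℕ∞) (fun p : ℝ × ℝ × ℝ × ℝ => f p.1 p.2.1 p.2.2.1 p.2.2.2)

/-- The uncurried form of a function of four variables. -/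
def unc (f : ℝ → ℝ → ℝ → ℝ → ℝ) (p : ℝ × ℝ × ℝ × ℝ) : ℝ := f p.1 p.2.1 p.2.2.1 p.2.2.2

lemma Smooth4.hasFDerivAt {f : ℝ → ℝ → ℝ → ℝ → ℝ} (hf : Smooth4 f) (p : ℝ × ℝ × ℝ × ℝ) :
    HasFDerivAt (unc f) (fderiv ℝ (unc f) p) p :=
  (ContDiff.differentiable hf (by simp) p).hasFDerivAt

lemma Smooth4.pds_eq {f : ℝ → ℝ → ℝ → ℝ → ℝ} (hf : Smooth4 f) (u s v t : ℝ) :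
    pds f u s v t = fderiv ℝ (unc f) (u, s, v, t) (0, 1, 0, 0) := by
  have hc : HasDerivAt (fun z : ℝ => ((u, z, v, t) : ℝ × ℝ × ℝ × ℝ)) (0, 1, 0, 0) s :=
    (hasDerivAt_const s u).prodMk ((hasDerivAt_id s).prodMk
      ((hasDerivAt_const s v).prodMk (hasDerivAt_const s t)))
  exact ((hf.hasFDerivAt (u, s, v, t)).comp_hasDerivAt s hc).deriv

lemma Smooth4.pdt_eq {f : ℝ → ℝ → ℝ → ℝ → ℝ} (hf : Smooth4 f) (u s v t : ℝ) :
    pdt f u s v t = fderiv ℝ (unc f) (u, s, v, t) (0, 0, 0, 1) := by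
  have hc : HasDerivAt (fun z : ℝ => ((u, s, v, z) : ℝ × ℝ × ℝ × ℝ)) (0, 0, 0, 1) t :=
    (hasDerivAt_const t u).prodMk ((hasDerivAt_const t s).prodMk
      ((hasDerivAt_const t v).prodMk (hasDerivAt_id t)))
  exact ((hf.hasFDerivAt (u, s, v, t)).comp_hasDerivAt t hc).deriv

lemma Smooth4.unc_pds {f : ℝ → ℝ → ℝ → ℝ → ℝ} (hf : Smooth4 f) :
    unc (pds f) = fun p => fderiv ℝ (unc f) p (0, 1, 0, 0) :=
  funext fun p => hf.pds_eq p.1 p.2.1 p.2.2.1 p.2.2.2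

lemma Smooth4.unc_pdt {f : ℝ → ℝ → ℝ → ℝ → ℝ} (hf : Smooth4 f) :
    unc (pdt f) = fun p => fderiv ℝ (unc f) p (0, 0, 0, 1) :=
  funext fun p => hf.pdt_eq p.1 p.2.1 p.2.2.1 p.2.2.2

lemma Smooth4.fderiv {f : ℝ → ℝ → ℝ → ℝ → ℝ} (hf : Smooth4 f) :
    ContDiff ℝ (⊤ : ℕ∞) (fderiv ℝ (unc f)) :=
  ContDiff.fderiv_right (n := (⊤ : ℕ∞)) hf (by simp)

lemma Smooth4.pds {f : ℝ → ℝ → ℝ → ℝ → ℝ} (hf : Smooth4 f) : Smooth4 (pds f) := by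
  change ContDiff ℝ (⊤ : ℕ∞) (unc (GSSFinsler.pds f))
  rw [hf.unc_pds]
  exact hf.fderiv.clm_apply contDiff_const

lemma Smooth4.pdt {f : ℝ → ℝ → ℝ → ℝ → ℝ} (hf : Smooth4 f) : Smooth4 (pdt f) := by
  change ContDiff ℝ (⊤ : ℕ∞) (unc (GSSFinsler.pdt f))
  rw [hf.unc_pdt]
  exact hf.fderiv.clm_apply contDiff_const

/-- Equality of mixed partials, `φ_{ts} = φ_{st}`. -/
lemma Smooth4.pds_pdt {f : ℝ → ℝ → ℝ → ℝ → ℝ} (hf : Smooth4 f) (u s v t : ℝ) :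
    GSSFinsler.pds (GSSFinsler.pdt f) u s v t = GSSFinsler.pdt (GSSFinsler.pds f) u s v t := by
  have hd : DifferentiableAt ℝ (_root_.fderiv ℝ (unc f)) (u, s, v, t) :=
    hf.fderiv.differentiable (by simp) _
  have hsymm : IsSymmSndFDerivAt ℝ (unc f) (u, s, v, t) :=
    (ContDiff.contDiffAt (n := (⊤ : ℕ∞)) hf).isSymmSndFDerivAt
      (by rw [minSmoothness_of_isRCLikeNormedField]; exact WithTop.coe_le_coe.mpr le_top)
  rw [hf.pdt.pds_eq, hf.pds.pdt_eq, hf.unc_pdt, hf.unc_pds,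
    fderiv_clm_apply hd (differentiableAt_const _),
    fderiv_clm_apply hd (differentiableAt_const _)]
  simpa using hsymm.eq (0, 1, 0, 0) (0, 0, 0, 1)

/-- Chain rule in `y`: `∂f(u,s,v,t) = f_s ∂s + f_t ∂t`, as `u` and `v` do not depend on `y`. -/
lemma hasFDerivAt_ev {n : ℕ} {f : ℝ → ℝ → ℝ → ℝ → ℝ} (hf : Smooth4 f)
    (a x : Fin n → ℝ) {y : Fin n → ℝ} (hy : y ≠ 0) :
    HasFDerivAt (fun z => ev f a x z)
      (ev (pds f) a x y • ((nrm y)⁻¹ • (ipL x - (sc x y / nrm y) • ipL y)) +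
        ev (pdt f) a x y • ((nrm y)⁻¹ • (ipL a - (tc a y / nrm y) • ipL y))) y := by
  have hc := (hasFDerivAt_const (𝕜 := ℝ) (uu x) y).prodMk ((hasFDerivAt_sc x hy).prodMk
    ((hasFDerivAt_const (𝕜 := ℝ) (vc a x) y).prodMk (hasFDerivAt_sc a hy)))
  have h := (hf.hasFDerivAt (uu x, sc x y, vc a x, sc a y)).comp y hc
  refine h.congr_fderiv ?_
  ext w
  have hlin : ∀ b c : ℝ, ((0, b, 0, c) : ℝ × ℝ × ℝ × ℝ) =
      b • ((0, 1, 0, 0) : ℝ × ℝ × ℝ × ℝ) + c • ((0, 0, 0, 1) : ℝ × ℝ × ℝ × ℝ) := by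
    intro b c; simp
  have hs : ev (pds f) a x y = _ := hf.pds_eq (uu x) (sc x y) (vc a x) (tc a y)
  have ht : ev (pdt f) a x y = _ := hf.pdt_eq (uu x) (sc x y) (vc a x) (tc a y)
  rw [hs, ht]
  simp only [ContinuousLinearMap.comp_apply, ContinuousLinearMap.prod_apply,
    zero_apply]
  rw [hlin, map_add, map_smul, map_smul]
  simp only [smul_eq_mul, add_apply, smul_apply]
  change _ * fderiv ℝ (unc f) (uu x, sc x y, vc a x, tc a y) _ +
    _ * fderiv ℝ (unc f) (uu x, sc x y, vc a x, tc a y) _ = _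
  simp only [show tc a y = sc a y from rfl]
  ring

/-- First derivative of `F²`:
`∂_j F² = 2 (φ² y_j + φφ_s (r x_j - s y_j) + φφ_t (r a_j - t y_j))`. -/
lemma fderiv_Fm_sq {n : ℕ} {φ : ℝ → ℝ → ℝ → ℝ → ℝ} (hφ : Smooth4 φ)
    (a x : Fin n → ℝ) {y : Fin n → ℝ} (hy : y ≠ 0) (j : Fin n) :
    fderiv ℝ (fun w => (Fm φ a x w) ^ 2) y (bvec n j) =
      2 * (ev φ a x y * (ev φ a x y * y j +
        ev (pds φ) a x y * (nrm y * x j - sc x y * y j) +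
        ev (pdt φ) a x y * (nrm y * a j - tc a y * y j))) := by
  have hr := (nrm_pos hy).ne'
  have h := ((hasFDerivAt_nrm hy).mul (hasFDerivAt_ev hφ a x hy)).pow 2
  have h' : HasFDerivAt (fun w => (Fm φ a x w) ^ 2) _ y := h
  rw [h'.fderiv]
  simp only [add_apply, smul_apply,
    sub_apply, ipL_bvec, smul_eq_mul, nsmul_eq_mul, Pi.mul_apply]
  field_simp
  push_cast
  ring

end GSSFinsler

open GSSFinsler in
/-- The explicit formula for the fundamental tensor of a
general spherically symmetric metric. -/
theorem fundamental_tensor_general_spherically_symmetric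
    {n : ℕ} (φ : ℝ → ℝ → ℝ → ℝ → ℝ)
    (hφ : ContDiff ℝ (⊤ : ℕ∞) (fun p : ℝ × ℝ × ℝ × ℝ => φ p.1 p.2.1 p.2.2.1 p.2.2.2))
    (a x y : Fin n → ℝ) (hy : y ≠ 0) :
    ∀ i j : Fin n,
      gm φ a x y i j =
        let p := ev φ a x y
        let ps := ev (pds φ) a x y
        let pt := ev (pdt φ) a x y
        let pss := ev (pds (pds φ)) a x y
        let ptt := ev (pdt (pdt φ)) a x y
        let pst := ev (pdt (pds φ)) a x y
        let s := sc x y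
        let t := tc a y
        let r := nrm y
        (p ^ 2 - s * p * ps - t * p * pt) * (if i = j then (1 : ℝ) else 0) +
        (pt ^ 2 + p * ptt) * (a i * a j) +
        (s ^ 2 * (ps ^ 2 + p * pss) + t ^ 2 * (pt ^ 2 + p * ptt) +
            2 * t * s * (ps * pt + p * pst) - s * p * ps - t * p * pt) *
          ((y i / r) * (y j / r)) +
        (p * pt - s * (ps * pt + p * pst) - t * (pt ^ 2 + p * ptt)) *
          (a j * (y i / r) + a i * (y j / r)) +
        (p * ps - s * (ps ^ 2 + p * pss) - t * (ps * pt + p * pst)) *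
          (x j * (y i / r) + x i * (y j / r)) +
        (ps * pt + p * pst) * (a j * x i + a i * x j) +
        (ps ^ 2 + p * pss) * (x i * x j) := by
  intro i j
  have hr := (nrm_pos hy).ne'
  have hS : Smooth4 φ := hφ
  -- The formula for `∂_j F²` holds near `y`, so it may be differentiated once more.
  have hev : (fun z => fderiv ℝ (fun w => (Fm φ a x w) ^ 2) z (bvec n j)) =ᶠ[nhds y]
      fun z => 2 * (ev φ a x z * (ev φ a x z * z j +
        ev (pds φ) a x z * (nrm z * x j - sc x z * z j) +
        ev (pdt φ) a x z * (nrm z * a j - tc a z * z j))) := by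
    filter_upwards [isOpen_ne.mem_nhds hy] with z hz
    exact fderiv_Fm_sq hS a x hz j
  have hp := hasFDerivAt_ev hS a x hy
  have hps := hasFDerivAt_ev hS.pds a x hy
  have hpt := hasFDerivAt_ev hS.pdt a x hy
  have hs := hasFDerivAt_sc x hy
  have ht : HasFDerivAt (fun z => tc a z)
      ((nrm y)⁻¹ • (ipL a - (tc a y / nrm y) • ipL y)) y := hasFDerivAt_sc a hy
  have hn := hasFDerivAt_nrm hy
  have hj : HasFDerivAt (fun z : Fin n → ℝ => z j)
      (ContinuousLinearMap.proj j : (Fin n → ℝ) →L[ℝ] ℝ) y :=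
    hasFDerivAt_apply (𝕜 := ℝ) (F' := fun _ : Fin n => ℝ) j y
  have h := (hp.fun_mul (((hp.fun_mul hj).fun_add
    (hps.fun_mul ((hn.mul_const (x j)).fun_sub (hs.fun_mul hj)))).fun_add
    (hpt.fun_mul ((hn.mul_const (a j)).fun_sub (ht.fun_mul hj))))).const_mul 2
  have hmix : ev (pds (pdt φ)) a x y = ev (pdt (pds φ)) a x y := hS.pds_pdt _ _ _ _
  have hδ : bvec n i j = if i = j then (1 : ℝ) else 0 := by
    simp [bvec, Pi.single_apply, eq_comm]
  unfold gm
  rw [hev.fderiv_eq, h.fderiv]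
  simp only [add_apply, smul_apply,
    sub_apply, ContinuousLinearMap.proj_apply, ipL_bvec, smul_eq_mul,
    hmix, hδ]
  generalize (if i = j then (1 : ℝ) else 0) = δ
  field_simp
  ring
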